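/- For every nonzero dominant integral weight Λ=c₀Λ₀+c₁Λ₁ of ŝl₂ and every real t≥0, the convex hull of the affine Weyl group orbit W(−Λ) is stable under translation by tδ; that is, Conv(W(−Λ)) + tδ ⊆ Conv(W(−Λ)). -/

import Mathlib

noncomputable section

namespace MVsl2

/-- The full weight space V̂ = ℝα₀ ⊕ ℝα₁ ⊕ ℝΛ₀, in coordinates (x₀, x₁, y). -/
abbrev Vhat : Type := ℝ × ℝ × ℝ

def Λ0 : Vhat := (0, 0, 1)
def Λ1 : Vhat := (0, 1/2, 1)
def α0h : Vhat := (1, 0, 0)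
def α1h : Vhat := (0, 1, 0)
def δh : Vhat := (1, 1, 0)

/-- The bilinear form extended to V̂: (Λ₀,α₀)=1, (Λ₀,α₁)=0, (Λ₀,Λ₀)=0. -/
def formh (x y : Vhat) : ℝ :=
  2 * x.1 * y.1 + 2 * x.2.1 * y.2.1 - 2 * x.1 * y.2.1 - 2 * x.2.1 * y.1 +
    x.2.2 * y.1 + x.1 * y.2.2

/-- The simple reflection s₀. -/
def s0h (x : Vhat) : Vhat := x - formh x α0h • α0h
/-- The simple reflection s₁. -/
def s1h (x : Vhat) : Vhat := x - formh x α1h • α1h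

/-- The orbit of v under the affine Weyl group W of ŝl₂ (the group generated by
the involutions s₀ and s₁, so the orbit consists of all words in s₀, s₁ applied to v). -/
def WOrbit (v : Vhat) : Set Vhat :=
  {x | ∃ l : List Bool, x = l.foldl (fun y b => if b then s1h y else s0h y) v}

theorem orbit_s0 {v x : Vhat} (hx : x ∈ WOrbit v) : s0h x ∈ WOrbit v := by
  obtain ⟨l, rfl⟩ := hx
  exact ⟨l ++ [false], by simp [List.foldl_append]⟩

theorem orbit_s1 {v x : Vhat} (hx : x ∈ WOrbit v) : s1h x ∈ WOrbit v := by
  obtain ⟨l, rfl⟩ := hx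
  exact ⟨l ++ [true], by simp [List.foldl_append]⟩

theorem s0h_mk (a b y : ℝ) : s0h (a, b, y) = (2 * b - a - y, b, y) := by
  simp [s0h, formh, α0h]
  ring

theorem s1h_mk (a b y : ℝ) : s1h (a, b, y) = (a, 2 * a - b, y) := by
  simp [s1h, formh, α1h]
  ring

theorem orbit_level {v x : Vhat} (hx : x ∈ WOrbit v) : x.2.2 = v.2.2 := by
  obtain ⟨l, rfl⟩ := hx
  induction l generalizing v with
  | nil => rfl
  | cons c l ih =>
    obtain ⟨a, b, y⟩ := v
    rw [List.foldl_cons, ih]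
    cases c <;> simp [s0h_mk, s1h_mk]

theorem orbit_up {v : Vhat} {a b y : ℝ} (hx : (a, b, y) ∈ WOrbit v) (n : ℕ) :
    (a + 2 * n * (a - b) - n ^ 2 * y, b + 2 * n * (a - b) - (n ^ 2 - n) * y, y) ∈ WOrbit v := by
  induction n with
  | zero => simpa using hx
  | succ n ih =>
    have h := orbit_s0 (orbit_s1 ih)
    rw [s1h_mk, s0h_mk] at h
    convert h using 2
    · push_cast; ring
    · congr 1
      push_cast; ring

theorem orbit_down {v : Vhat} {a b y : ℝ} (hx : (a, b, y) ∈ WOrbit v) (n : ℕ) :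
    (a - 2 * n * (a - b) - n ^ 2 * y, b - 2 * n * (a - b) - (n ^ 2 + n) * y, y) ∈ WOrbit v := by
  induction n with
  | zero => simpa using hx
  | succ n ih =>
    have h := orbit_s1 (orbit_s0 ih)
    rw [s0h_mk, s1h_mk] at h
    convert h using 2
    · push_cast; ring
    · congr 1
      push_cast; ring

theorem orbit_shift {v x : Vhat} (hv : v.2.2 < 0) (hx : x ∈ WOrbit v) (t : ℝ) (ht : 0 ≤ t) :
    x + t • δh ∈ convexHull ℝ (WOrbit v) := by
  have hl := orbit_level hx
  obtain ⟨a, b, y⟩ := x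
  simp only at hl
  rw [← hl] at hv
  obtain ⟨n, hn⟩ := exists_nat_ge (t / (-y) + 1)
  have hq : 0 ≤ t / (-y) := div_nonneg ht (by linarith)
  have hn1 : (1 : ℝ) ≤ n := by linarith
  have hy : 0 < -y := by linarith
  have hN : 0 < (n : ℝ) ^ 2 * (-y) := by positivity
  have htN : t ≤ (n : ℝ) ^ 2 * (-y) := by
    rw [← div_le_iff₀ hy]
    nlinarith
  set r := t / ((n : ℝ) ^ 2 * (-y)) with hr
  have hr0 : 0 ≤ r := div_nonneg ht hN.le
  have hr1 : r ≤ 1 := (div_le_one hN).2 htN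
  have hrt : r * ((n : ℝ) ^ 2 * (-y)) = t := div_mul_cancel₀ _ hN.ne'
  have hc := convex_convexHull ℝ (WOrbit v)
  have h1 := hc (subset_convexHull ℝ _ (orbit_up hx n)) (subset_convexHull ℝ _ (orbit_down hx n))
    (a := 1 / 2) (b := 1 / 2) (by norm_num) (by norm_num) (by norm_num)
  have h2 := hc (subset_convexHull ℝ _ hx) h1 (a := 1 - r) (b := r) (by linarith) hr0 (by ring)
  convert h2 using 1
  rw [← hrt]
  simp only [δh, Prod.smul_mk, Prod.mk_add_mk, smul_eq_mul, Prod.mk.injEq]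
  refine ⟨?_, ?_, ?_⟩ <;> ring

/-- for every nonzero dominant integral weight Λ = c₀Λ₀ + c₁Λ₁ and
every t ≥ 0, the convex hull of the affine Weyl group orbit W(−Λ) is stable under
translation by tδ. -/
theorem statement18 (c0 c1 : ℕ) (hΛ : ¬ (c0 = 0 ∧ c1 = 0)) (t : ℝ) (ht : 0 ≤ t) :
    ∀ x ∈ convexHull ℝ (WOrbit (-((c0 : ℝ) • Λ0 + (c1 : ℝ) • Λ1))),
      x + t • δh ∈ convexHull ℝ (WOrbit (-((c0 : ℝ) • Λ0 + (c1 : ℝ) • Λ1))) := by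
  intro x hx
  set v : Vhat := -((c0 : ℝ) • Λ0 + (c1 : ℝ) • Λ1) with hv
  have hneg : v.2.2 < 0 := by
    have h : 0 < c0 + c1 := by omega
    have h' : (0 : ℝ) < c0 + c1 := by exact_mod_cast h
    simp [hv, Λ0, Λ1]
    linarith
  have hsub : convexHull ℝ (WOrbit v) ⊆ (fun z => z + t • δh) ⁻¹' convexHull ℝ (WOrbit v) :=
    convexHull_min (fun z hz => orbit_shift hneg hz t ht)
      ((convex_convexHull ℝ (WOrbit v)).translate_preimage_left _)
  exact hsub hx
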